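/- (Chvátal) Let G = (V, E) be a finite simple graph and let U ⊆ V be a clique cutset decomposing G into G₁ = G[V₁ ∪ U] and G₂ = G[V₂ ∪ U]; that is, V = V₁ ∪ U ∪ V₂ with V₁, U, V₂ pairwise disjoint, G[U] is a clique, and no edge of G joins a vertex of V₁ to a vertex of V₂. Then STAB(G) = {z ∈ ℝ^V : the restriction of z to V₁ ∪ U lies in STAB(G₁) and the restriction of z to V₂ ∪ U lies in STAB(G₂)}. -/

import Mathlib

open Set

/-- The stable set polytope of a graph: the convex hull of the characteristic vectors of its
independent (stable) sets. -/
def stabPolytope {V : Type*} (G : SimpleGraph V) : Set (V → ℝ) :=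
  convexHull ℝ
    {x : V → ℝ | ∃ S : Set V, (∀ u ∈ S, ∀ w ∈ S, ¬ G.Adj u w) ∧ x = S.indicator 1}

/-!
Write `A = V₁ ∪ U` and `B = V₂ ∪ U`, so that `A ∩ B = U`. A stable set meets the clique `A ∩ B` in
at most one vertex, so its characteristic vector restricted to `A ∩ B` is `0` or a standard unit
vector. These vectors are affinely independent: if convex combinations of stable sets of `G[A]`
and of `G[B]` agree on `A ∩ B`, then both give the same total weight to each trace on `A ∩ B`.
Hence the two combinations can be coupled so that only stable sets with the same trace are paired,
and each such pair glues to a stable set of `G`.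
-/

section AffineIndependent

variable {𝕜 ι ι' κ : Type*} [Fintype ι] [Fintype ι'] [DecidableEq κ] {a : ι → κ} {b : ι' → κ}
  {w : ι → 𝕜} {v : ι' → 𝕜}

lemma sum_sum_fiber_smul {W : Type*} [Semiring 𝕜] [AddCommMonoid W] [Module 𝕜 W] {s : Finset κ}
    (ha : ∀ i, a i ∈ s) (w : ι → 𝕜) (p : κ → W) :
    ∑ k ∈ s, (∑ i with a i = k, w i) • p k = ∑ i, w i • p (a i) := by
  rw [← Finset.sum_fiberwise_of_maps_to fun i _ => ha i]
  refine Finset.sum_congr rfl fun k _ => ?_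
  rw [Finset.sum_smul]
  exact Finset.sum_congr rfl fun i hi => by rw [(Finset.mem_filter.1 hi).2]

lemma sum_fiber_eq_of_affineIndependent {W : Type*} [Ring 𝕜] [AddCommGroup W] [Module 𝕜 W]
    {p : κ → W} (hp : AffineIndependent 𝕜 p) (hwv : ∑ i, w i = ∑ j, v j)
    (h : ∑ i, w i • p (a i) = ∑ j, v j • p (b j)) (k : κ) :
    ∑ i with a i = k, w i = ∑ j with b j = k, v j := by
  let s : Finset κ := insert k (Finset.univ.image a ∪ Finset.univ.image b)
  have ha (i : ι) : a i ∈ s := by simp [s]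
  have hb (j : ι') : b j ∈ s := by simp [s]
  refine sub_eq_zero.1 <| affineIndependent_iff.1 hp s
    (fun k => ∑ i with a i = k, w i - ∑ j with b j = k, v j) ?_ ?_ k (Finset.mem_insert_self _ _)
  · rw [Finset.sum_sub_distrib, Finset.sum_fiberwise_of_maps_to fun i _ => ha i,
      Finset.sum_fiberwise_of_maps_to fun j _ => hb j, hwv, sub_self]
  · simp only [sub_smul, Finset.sum_sub_distrib, sum_sum_fiber_smul ha, sum_sum_fiber_smul hb, h,
      sub_self]

variable [Field 𝕜] [LinearOrder 𝕜] [IsStrictOrderedRing 𝕜]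

lemma exists_coupling_of_sum_fiber_eq (hw : ∀ i, 0 ≤ w i) (hv : ∀ j, 0 ≤ v j)
    (h : ∀ k, ∑ i with a i = k, w i = ∑ j with b j = k, v j) :
    ∃ r : ι → ι' → 𝕜, (∀ i j, 0 ≤ r i j) ∧ (∀ i j, r i j ≠ 0 → a i = b j) ∧
      (∀ i, ∑ j, r i j = w i) ∧ ∀ j, ∑ i, r i j = v j := by
  let m : κ → 𝕜 := fun k => ∑ i with a i = k, w i
  have hwm (i : ι) : m (a i) = 0 → w i = 0 := fun hm =>
    (Finset.sum_eq_zero_iff_of_nonneg fun i _ => hw i).1 hm i (by simp)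
  have hvm (j : ι') : m (b j) = 0 → v j = 0 := fun hm =>
    (Finset.sum_eq_zero_iff_of_nonneg fun j _ => hv j).1 ((h _).symm.trans hm) j (by simp)
  -- Conditionally on the common label, the two coordinates are independent.
  refine ⟨fun i j => if a i = b j then w i * v j / m (a i) else 0, fun i j => ?_,
    fun i j hij => ?_, fun i => ?_, fun j => ?_⟩
  · have hm : 0 ≤ m (a i) := Finset.sum_nonneg fun i _ => hw i
    have := hw i
    have := hv j
    positivity
  · exact (ite_ne_right_iff.1 hij).1
  · calc
      ∑ j, (if a i = b j then w i * v j / m (a i) else 0)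
        = w i * (∑ j with b j = a i, v j) / m (a i) := by
          simp only [← Finset.sum_filter, Finset.mul_sum, Finset.sum_div, eq_comm]
      _ = w i := by rw [← h]; exact mul_div_cancel_of_imp (hwm i)
  · calc
      ∑ i, (if a i = b j then w i * v j / m (a i) else 0)
        = ∑ i with a i = b j, v j * w i / m (b j) := by
          rw [Finset.sum_filter]
          exact Finset.sum_congr rfl fun i _ => by split_ifs with hij <;> simp [hij, mul_comm]
      _ = v j * m (b j) / m (b j) := by rw [← Finset.sum_div, ← Finset.mul_sum]
      _ = v j := mul_div_cancel_of_imp (hvm j)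

variable {E F W : Type*} [AddCommGroup E] [Module 𝕜 E] [AddCommGroup F] [Module 𝕜 F]
  [AddCommGroup W] [Module 𝕜 W]

lemma mk_mem_convexHull_fiberProduct {T : Set W}
    (hT : AffineIndependent 𝕜 ((↑) : T → W)) (f : E →ₗ[𝕜] W) (g : F →ₗ[𝕜] W)
    {P : Set E} {Q : Set F} (hP : MapsTo f P T) (hQ : MapsTo g Q T) {x : E} {y : F}
    (hx : x ∈ convexHull 𝕜 P) (hy : y ∈ convexHull 𝕜 Q) (hxy : f x = g y) :
    (x, y) ∈ convexHull 𝕜 {z ∈ P ×ˢ Q | f z.1 = g z.2} := by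
  classical
  obtain ⟨ι, _, w, p, hw, hw1, hp, rfl⟩ := mem_convexHull_iff_exists_fintype.1 hx
  obtain ⟨ι', _, v, q, hv, hv1, hq, rfl⟩ := mem_convexHull_iff_exists_fintype.1 hy
  have hfiber := sum_fiber_eq_of_affineIndependent hT (w := w) (v := v)
    (a := fun i => ⟨f (p i), hP (hp i)⟩) (b := fun j => ⟨g (q j), hQ (hq j)⟩)
    (hw1.trans hv1.symm) (by simpa using hxy)
  obtain ⟨r, hr, hrsupp, hrw, hrv⟩ := exists_coupling_of_sum_fiber_eq hw hv hfiber
  have hsum : ∑ ij : ι × ι', r ij.1 ij.2 • (p ij.1, q ij.2) =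
      (∑ i, w i • p i, ∑ j, v j • q j) := by
    ext
    · simp only [Prod.fst_sum, Prod.smul_fst, Fintype.sum_prod_type, ← Finset.sum_smul, hrw]
    · simp only [Prod.snd_sum, Prod.smul_snd, Fintype.sum_prod_type_right, ← Finset.sum_smul, hrv]
  rw [← hsum, ← finsum_eq_sum_of_fintype]
  refine (convex_convexHull 𝕜 _).finsum_mem (fun ij => hr ij.1 ij.2) ?_ fun ij hij => ?_
  · rw [finsum_eq_sum_of_fintype, Fintype.sum_prod_type]
    simp only [hrw, hw1]
  · exact subset_convexHull 𝕜 _ ⟨⟨hp _, hq _⟩, congrArg Subtype.val (hrsupp _ _ hij)⟩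

end AffineIndependent

section StableVectors

variable {V W : Type*} {G : SimpleGraph V}

/-- The characteristic vectors of the stable sets of `G`, whose convex hull is `stabPolytope G`. -/
def stableVectors (G : SimpleGraph V) : Set (V → ℝ) :=
  {x | ∃ S : Set V, G.IsIndepSet S ∧ x = S.indicator 1}

lemma stabPolytope_eq_convexHull_stableVectors (G : SimpleGraph V) :
    stabPolytope G = convexHull ℝ (stableVectors G) := by
  have hindep (S : Set V) : (∀ u ∈ S, ∀ w ∈ S, ¬ G.Adj u w) ↔ G.IsIndepSet S :=
    ⟨fun hS u hu w hw _ => hS u hu w hw, fun hS u hu w hw huw => hS hu hw huw.ne huw⟩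
  simp only [stabPolytope, stableVectors, hindep]

lemma comp_mem_stableVectors_comap (φ : W → V) {x : V → ℝ} (hx : x ∈ stableVectors G) :
    x ∘ φ ∈ stableVectors (G.comap φ) := by
  obtain ⟨S, hS, rfl⟩ := hx
  exact ⟨φ ⁻¹' S, fun u hu w hw _ huw => hS hu hw (G.ne_of_adj huw) huw, rfl⟩

lemma comp_mem_stabPolytope_comap (φ : W → V) {x : V → ℝ} (hx : x ∈ stabPolytope G) :
    x ∘ φ ∈ stabPolytope (G.comap φ) := by
  rw [stabPolytope_eq_convexHull_stableVectors] at hx ⊢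
  have hmaps : stableVectors G ⊆
      LinearMap.funLeft ℝ ℝ φ ⁻¹' convexHull ℝ (stableVectors (G.comap φ)) :=
    fun _ hy => subset_convexHull ℝ _ (comp_mem_stableVectors_comap φ hy)
  exact convexHull_min hmaps ((convex_convexHull ℝ _).linear_preimage _) hx

lemma stableVectors_top_subset [DecidableEq V] :
    stableVectors (⊤ : SimpleGraph V) ⊆ {0} ∪ range fun v => Pi.single v 1 := by
  rintro _ ⟨S, hS, rfl⟩
  have hsub : S.Subsingleton := fun u hu w hw => of_not_not fun hne => hS hu hw hne hne
  rcases hsub.eq_empty_or_singleton with rfl | ⟨v, rfl⟩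
  · exact Or.inl (indicator_empty _)
  · exact Or.inr ⟨v, (indicator_singleton v 1).symm⟩

lemma affineIndependent_stableVectors_top (V : Type*) :
    AffineIndependent ℝ ((↑) : stableVectors (⊤ : SimpleGraph V) → V → ℝ) := by
  classical
  have hne : ∀ x ∈ range fun v : V => (Pi.single v 1 : V → ℝ), x ≠ 0 := by
    rintro _ ⟨v, rfl⟩
    simp
  have hind := (linearIndependent_set_iff_affineIndependent_vadd_union_singleton ℝ hne
    (0 : V → ℝ)).1
    (Pi.linearIndependent_single_one V ℝ).linearIndepOn_id
  exact hind.mono (stableVectors_top_subset.trans (by simp))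

lemma comp_inclusion_mem_stableVectors_top {A U : Set V} (hU : G.IsClique U) (hUA : U ⊆ A)
    {x : A → ℝ} (hx : x ∈ stableVectors (G.induce A)) :
    x ∘ inclusion hUA ∈ stableVectors (⊤ : SimpleGraph U) := by
  rw [← SimpleGraph.induce_eq_top.2 hU]
  exact comp_mem_stableVectors_comap (inclusion hUA) hx

variable {A B : Set V}

lemma exists_isIndepSet_preimage_eq (hcut : ∀ u ∈ A \ B, ∀ w ∈ B \ A, ¬ G.Adj u w)
    (hcover : A ∪ B = univ) {S : Set A} {T : Set B} (hS : (G.induce A).IsIndepSet S)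
    (hT : (G.induce B).IsIndepSet T)
    (hST : ∀ v (hA : v ∈ A) (hB : v ∈ B), ⟨v, hA⟩ ∈ S ↔ ⟨v, hB⟩ ∈ T) :
    ∃ R : Set V, G.IsIndepSet R ∧ (↑) ⁻¹' R = S ∧ (↑) ⁻¹' R = T := by
  let R : Set V := {v | (∀ hA : v ∈ A, ⟨v, hA⟩ ∈ S) ∧ ∀ hB : v ∈ B, ⟨v, hB⟩ ∈ T}
  have hside : ∀ v, v ∈ A ∨ v ∈ B := fun v => hcover.ge (mem_univ v)
  have hedge : ∀ u w, G.Adj u w → (u ∈ A ∧ w ∈ A) ∨ (u ∈ B ∧ w ∈ B) := by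
    intro u w huw
    by_contra! hsplit
    rcases hside u with hu | hu
    · have hw : w ∉ A := hsplit.1 hu
      have hw' := (hside w).resolve_left hw
      exact hcut u ⟨hu, fun hu' => hsplit.2 hu' hw'⟩ w ⟨hw', hw⟩ huw
    · have hw : w ∉ B := hsplit.2 hu
      have hw' := (hside w).resolve_right hw
      exact hcut w ⟨hw', hw⟩ u ⟨hu, fun hu' => hsplit.1 hu' hw'⟩ huw.symm
  refine ⟨R, fun u hu w hw hne huw => ?_, ?_, ?_⟩
  · rcases hedge u w huw with ⟨huA, hwA⟩ | ⟨huB, hwB⟩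
    · exact hS (hu.1 huA) (hw.1 hwA) (by simpa using hne) huw
    · exact hT (hu.2 huB) (hw.2 hwB) (by simpa using hne) huw
  · ext ⟨v, hA⟩
    exact ⟨fun hv => hv.1 hA, fun hv => ⟨fun _ => hv, fun hB => (hST v hA hB).1 hv⟩⟩
  · ext ⟨v, hB⟩
    exact ⟨fun hv => hv.2 hB, fun hv => ⟨fun hA => (hST v hA hB).2 hv, fun _ => hv⟩⟩

lemma exists_mem_stableVectors_restrict_eq (hcut : ∀ u ∈ A \ B, ∀ w ∈ B \ A, ¬ G.Adj u w)
    (hcover : A ∪ B = univ) {x : A → ℝ} {y : B → ℝ} (hx : x ∈ stableVectors (G.induce A))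
    (hy : y ∈ stableVectors (G.induce B))
    (hxy : x ∘ inclusion inter_subset_left = y ∘ inclusion (inter_subset_right (s := A))) :
    ∃ z ∈ stableVectors G, z ∘ (↑) = x ∧ z ∘ (↑) = y := by
  obtain ⟨S, hS, rfl⟩ := hx
  obtain ⟨T, hT, rfl⟩ := hy
  have hST : ∀ v (hA : v ∈ A) (hB : v ∈ B), ⟨v, hA⟩ ∈ S ↔ ⟨v, hB⟩ ∈ T := fun v hA hB => by
    have hv : S.indicator (1 : A → ℝ) ⟨v, hA⟩ = T.indicator (1 : B → ℝ) ⟨v, hB⟩ :=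
      congrFun hxy ⟨v, hA, hB⟩
    rw [← indicator_eq_one_iff_mem ℝ, hv, indicator_eq_one_iff_mem]
  obtain ⟨R, hR, rfl, rfl⟩ := exists_isIndepSet_preimage_eq hcut hcover hS hT hST
  exact ⟨R.indicator 1, ⟨R, hR, rfl⟩, rfl, rfl⟩

lemma mem_stabPolytope_of_restrict_mem (hclique : G.IsClique (A ∩ B))
    (hcut : ∀ u ∈ A \ B, ∀ w ∈ B \ A, ¬ G.Adj u w) (hcover : A ∪ B = univ) {z : V → ℝ}
    (hA : z ∘ (↑) ∈ stabPolytope (G.induce A)) (hB : z ∘ (↑) ∈ stabPolytope (G.induce B)) :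
    z ∈ stabPolytope G := by
  rw [stabPolytope_eq_convexHull_stableVectors] at hA hB ⊢
  let ρ : (V → ℝ) →ₗ[ℝ] (A → ℝ) × (B → ℝ) :=
    (LinearMap.funLeft ℝ ℝ (↑)).prod (LinearMap.funLeft ℝ ℝ (↑))
  have hρ : Function.Injective ρ := fun z z' h => funext fun v =>
    (hcover.ge (mem_univ v)).elim (fun hv => congrFun (congrArg Prod.fst h) ⟨v, hv⟩)
      fun hv => congrFun (congrArg Prod.snd h) ⟨v, hv⟩
  rw [← hρ.mem_set_image, ρ.image_convexHull]
  refine convexHull_mono ?_ <| mk_mem_convexHull_fiberProduct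
    (affineIndependent_stableVectors_top (A ∩ B : Set V))
    (LinearMap.funLeft ℝ ℝ (inclusion inter_subset_left))
    (LinearMap.funLeft ℝ ℝ (inclusion inter_subset_right))
    (fun _ => comp_inclusion_mem_stableVectors_top hclique _)
    (fun _ => comp_inclusion_mem_stableVectors_top hclique _) hA hB rfl
  rintro ⟨x, y⟩ ⟨⟨hx, hy⟩, hxy⟩
  obtain ⟨z, hz, rfl, rfl⟩ := exists_mem_stableVectors_restrict_eq hcut hcover hx hy hxy
  exact ⟨z, hz, rfl⟩

end StableVectors

theorem stab_clique_cutset_general {V : Type*} (G : SimpleGraph V) {A B : Set V}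
    (hcover : A ∪ B = univ) (hclique : G.IsClique (A ∩ B))
    (hcut : ∀ u ∈ A \ B, ∀ w ∈ B \ A, ¬ G.Adj u w) :
    stabPolytope G =
      {z : V → ℝ | (fun v : A => z v) ∈ stabPolytope (G.induce A) ∧
        (fun v : B => z v) ∈ stabPolytope (G.induce B)} :=
  Subset.antisymm
    (fun _ hz => ⟨comp_mem_stabPolytope_comap _ hz, comp_mem_stabPolytope_comap _ hz⟩)
    fun _ hz => mem_stabPolytope_of_restrict_mem hclique hcut hcover hz.1 hz.2

/-- Chvátal's theorem: if `U` is a clique cutset of the finite simple graph `G` decomposing it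
into `G₁ = G[V₁ ∪ U]` and `G₂ = G[V₂ ∪ U]`, then `STAB(G)` consists exactly of the points whose
restriction to `V₁ ∪ U` lies in `STAB(G₁)` and whose restriction to `V₂ ∪ U` lies in
`STAB(G₂)`. -/
theorem stab_clique_cutset {V : Type*} [Fintype V] [DecidableEq V]
    (G : SimpleGraph V) (V₁ U V₂ : Finset V)
    (hdisj₁ : Disjoint V₁ U) (hdisj₂ : Disjoint V₂ U) (hdisj₃ : Disjoint V₁ V₂)
    (hcover : V₁ ∪ U ∪ V₂ = Finset.univ)
    (hclique : ∀ u ∈ U, ∀ w ∈ U, u ≠ w → G.Adj u w)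
    (hcut : ∀ u ∈ V₁, ∀ w ∈ V₂, ¬ G.Adj u w) :
    stabPolytope G =
      {z : V → ℝ |
        (fun v : (↑(V₁ ∪ U) : Set V) => z ↑v) ∈
          stabPolytope (SimpleGraph.induce (↑(V₁ ∪ U) : Set V) G) ∧
        (fun v : (↑(V₂ ∪ U) : Set V) => z ↑v) ∈
          stabPolytope (SimpleGraph.induce (↑(V₂ ∪ U) : Set V) G)} := by
  have hmem (v : V) : v ∈ V₁ ∪ U ∪ V₂ := hcover ▸ Finset.mem_univ v
  have hinter (v : V) (h₁ : v ∈ V₁ ∪ U) (h₂ : v ∈ V₂ ∪ U) : v ∈ U := by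
    grind [Finset.disjoint_left]
  exact stab_clique_cutset_general G (eq_univ_of_forall fun v => by grind [hmem v])
    (fun u hu w hw => hclique u (hinter u hu.1 hu.2) w (hinter w hw.1 hw.2))
    fun u hu w hw => hcut u (by grind) w (by grind)
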